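/- Let f be a differentiable function on [a,b] with |f'(x)| ≤ M for all x ∈ [a,b]. Then |(1/2)f((a+b)/2) + (f(a)+f(b))/4 − (1/(b−a)) ∫_a^b f(t) dt| ≤ M(b−a)/4. -/

import Mathlib

open MeasureTheory intervalIntegral Set

/-- Crude trapezoid bound for a Lipschitz function. -/
lemma trap_aux (a b M : ℝ) (hab : a ≤ b) (f : ℝ → ℝ)
    (hc : ContinuousOn f (Set.Icc a b))
    (hL : ∀ x ∈ Set.Icc a b, ∀ y ∈ Set.Icc a b, |f y - f x| ≤ M * |y - x|) :
    |(∫ t in a..b, f t) - (b - a) * ((f a + f b) / 2)| ≤ M * (b - a) / 2 * (b - a) := by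
  have hi : IntervalIntegrable f volume a b :=
    ContinuousOn.intervalIntegrable (by rwa [Set.uIcc_of_le hab])
  have h : (∫ t in a..b, f t) - (b - a) * ((f a + f b) / 2)
      = ∫ t in a..b, (f t - (f a + f b) / 2) := by
    rw [intervalIntegral.integral_sub hi intervalIntegrable_const,
      intervalIntegral.integral_const, smul_eq_mul]
  rw [h]
  have := intervalIntegral.norm_integral_le_of_norm_le_const (a := a) (b := b)
    (f := fun t => f t - (f a + f b) / 2) (C := M * (b - a) / 2) (by
      intro t ht
      rw [Set.uIoc_of_le hab] at ht
      have htI : t ∈ Set.Icc a b := ⟨ht.1.le, ht.2⟩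
      have h1 := hL a ⟨le_rfl, hab⟩ t htI
      have h2 := hL b ⟨hab, le_rfl⟩ t htI
      rw [abs_of_nonneg (sub_nonneg.2 ht.1.le)] at h1
      rw [abs_of_nonpos (sub_nonpos.2 ht.2)] at h2
      rw [Real.norm_eq_abs, abs_le]
      rw [abs_le] at h1 h2
      constructor <;> linarith [h1.1, h1.2, h2.1, h2.2])
  rwa [Real.norm_eq_abs, abs_of_nonneg (sub_nonneg.2 hab)] at this

theorem midpoint_ostrowski_gruss
    (a b M : ℝ) (hab : a < b) (hM : 0 < M)
    (f f' : ℝ → ℝ)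
    (hf : ∀ t ∈ Set.Icc a b, HasDerivAt f (f' t) t)
    (hbound : ∀ t ∈ Set.Icc a b, |f' t| ≤ M) :
    |(1 / 2) * f ((a + b) / 2) + (f a + f b) / 4
        - (1 / (b - a)) * ∫ t in a..b, f t|
      ≤ M * (b - a) / 4 := by
  have hc : ContinuousOn f (Set.Icc a b) :=
    fun t ht => (hf t ht).continuousAt.continuousWithinAt
  have hL : ∀ x ∈ Set.Icc a b, ∀ y ∈ Set.Icc a b, |f y - f x| ≤ M * |y - x| := by
    intro x hx y hy
    exact (convex_Icc a b).norm_image_sub_le_of_norm_hasDerivWithin_le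
      (fun t ht => (hf t ht).hasDerivWithinAt) hbound hx hy
  obtain ⟨m, hm⟩ : ∃ m, m = (a + b) / 2 := ⟨_, rfl⟩
  have ham : a ≤ m := by linarith
  have hmb : m ≤ b := by linarith
  have s1 : Set.Icc a m ⊆ Set.Icc a b := Set.Icc_subset_Icc_right hmb
  have s2 : Set.Icc m b ⊆ Set.Icc a b := Set.Icc_subset_Icc_left ham
  have h1 := trap_aux a m M ham f (hc.mono s1) (fun x hx y hy => hL x (s1 hx) y (s1 hy))
  have h2 := trap_aux m b M hmb f (hc.mono s2) (fun x hx y hy => hL x (s2 hx) y (s2 hy))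
  have i1 : IntervalIntegrable f volume a m :=
    ContinuousOn.intervalIntegrable (by rw [Set.uIcc_of_le ham]; exact hc.mono s1)
  have i2 : IntervalIntegrable f volume m b :=
    ContinuousOn.intervalIntegrable (by rw [Set.uIcc_of_le hmb]; exact hc.mono s2)
  rw [← hm, ← intervalIntegral.integral_add_adjacent_intervals i1 i2]
  generalize (∫ t in a..m, f t) = I at *
  generalize (∫ t in m..b, f t) = J at *
  have hpos : 0 < b - a := sub_pos.2 hab
  have e1 : m - a = (b - a) / 2 := by linarith
  have e2 : b - m = (b - a) / 2 := by linarith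
  rw [e1] at h1
  rw [e2] at h2
  have key : (1 / 2) * f m + (f a + f b) / 4 - (1 / (b - a)) * (I + J)
      = ((b - a) * ((1 / 2) * f m + (f a + f b) / 4) - (I + J)) / (b - a) := by
    field_simp
  rw [key, abs_div, abs_of_pos hpos, div_le_iff₀ hpos]
  rw [abs_le] at *
  constructor <;> linarith [h1.1, h1.2, h2.1, h2.2]
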